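/- Let m ≥ 2, d ≥ 1, z₁ ∈ ℝ, and let G be an invertible Hermitian md×md complex matrix satisfying condition (A2). Then for every c ∈ ℂ^d, the vector x := (G^{-1}·(G·M_d)^* − M_d)·η(c) ∈ ℂ^{md} satisfies (G·x)_{(σ,m)} = 0 for every σ ∈ {1,…,d}. -/

import Mathlib

open Matrix

/-- The `m × m` matrix `M = z₁·I + N`, where `N` is the upper-shift matrix. -/
noncomputable def shiftM (m : ℕ) (z₁ : ℝ) : Matrix (Fin m) (Fin m) ℂ :=
  Matrix.of fun j j' : Fin m =>
    (if j = j' then (z₁ : ℂ) else 0) + (if (j' : ℕ) = (j : ℕ) + 1 then 1 else 0)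

/-- The `md × md` block-diagonal matrix consisting of `d` copies of `M`. -/
noncomputable def Md (m d : ℕ) (z₁ : ℝ) :
    Matrix (Fin d × Fin m) (Fin d × Fin m) ℂ :=
  Matrix.of fun p q : Fin d × Fin m =>
    if p.1 = q.1 then shiftM m z₁ p.2 q.2 else 0

/-- The embedding `η : ℂ^d → ℂ^{md}`, `(η c)_{(σ,j)} = c_σ` if `j` is the last index
(1-based index `m`) and `0` otherwise. -/
def eta (m d : ℕ) (c : Fin d → ℂ) : Fin d × Fin m → ℂ :=
  fun p => if (p.2 : ℕ) + 1 = m then c p.1 else 0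

/-- Condition (A2): `G_{(σ,m−1),(σ',m)} = G_{(σ,m),(σ',m−1)}` for all `σ, σ'`. -/
def A2 (m d : ℕ) (hm : 2 ≤ m)
    (G : Matrix (Fin d × Fin m) (Fin d × Fin m) ℂ) : Prop :=
  ∀ σ σ' : Fin d,
    G (σ, ⟨m - 2, by omega⟩) (σ', ⟨m - 1, by omega⟩) =
      G (σ, ⟨m - 1, by omega⟩) (σ', ⟨m - 2, by omega⟩)

/-!
Multiplying by `G` turns `x` into `((G M_d)^* - G M_d) η(c)`, and since `η(c)` lives on the
`m`-th coordinates, `(G x)_{(·,m)}` only sees the block of `G M_d` with both inner indices `m`.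
Because `M e_m = z₁ e_m + e_{m-1}`, this block is `z₁ G_{mm} + G_{m,m-1}`, where
`G_{jk} = (G_{(σ,j),(σ',k)})_{σσ'}`. The first term is Hermitian since `z₁` is real. So is the
second, whose adjoint `G_{m-1,m}` equals `G_{m,m-1}` by (A2).
-/

section

open scoped Kronecker

theorem mul_one_kronecker_apply {ι κ n l R : Type*} [Fintype ι] [DecidableEq ι] [Fintype κ]
    [NonAssocSemiring R] (G : Matrix n (ι × κ) R) (A : Matrix κ l R) (p : n) (τ : ι) (j : l) :
    (G * ((1 : Matrix ι ι R) ⊗ₖ A)) p (τ, j) = ∑ k, G p (τ, k) * A k j := by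
  simp [Matrix.mul_apply, Fintype.sum_prod_type_right, Matrix.one_apply]

theorem Md_eq_one_kronecker_shiftM (m d : ℕ) (z₁ : ℝ) :
    Md m d z₁ = (1 : Matrix (Fin d) (Fin d) ℂ) ⊗ₖ shiftM m z₁ := by
  ext p q
  simp [Md, Matrix.one_apply]

end

variable {m d : ℕ}

theorem sum_mul_shiftM_of_eq_succ (z₁ : ℝ) (f : Fin m → ℂ) {i j : Fin m} (hij : (j : ℕ) = i + 1) :
    ∑ k, f k * shiftM m z₁ k j = f j * z₁ + f i := by
  have eq_succ_iff (k : Fin m) : (j : ℕ) = k + 1 ↔ k = i := by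
    rw [hij, Nat.add_right_cancel_iff, eq_comm, Fin.ext_iff]
  simp [shiftM, eq_succ_iff, mul_add, Finset.sum_add_distrib]

theorem mul_Md_apply_of_eq_succ {n : Type*} (z₁ : ℝ) (G : Matrix n (Fin d × Fin m) ℂ)
    {i j : Fin m} (hij : (j : ℕ) = i + 1) (p : n) (τ : Fin d) :
    (G * Md m d z₁) p (τ, j) = G p (τ, j) * z₁ + G p (τ, i) := by
  rw [Md_eq_one_kronecker_shiftM, mul_one_kronecker_apply,
    sum_mul_shiftM_of_eq_succ z₁ (fun k => G p (τ, k)) hij]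

theorem isHermitian_submatrix_mul_Md (z₁ : ℝ) {G : Matrix (Fin d × Fin m) (Fin d × Fin m) ℂ}
    (hG : G.IsHermitian) {i j : Fin m} (hij : (j : ℕ) = i + 1)
    (hswap : ∀ σ τ, G (σ, i) (τ, j) = G (σ, j) (τ, i)) :
    ((G * Md m d z₁).submatrix (·, j) (·, j)).IsHermitian := by
  refine Matrix.IsHermitian.ext fun σ τ => ?_
  calc star ((G * Md m d z₁) (τ, j) (σ, j))
      = star (G (τ, j) (σ, j) * z₁ + G (τ, j) (σ, i)) := by
        rw [mul_Md_apply_of_eq_succ z₁ G hij]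
    _ = G (σ, j) (τ, j) * z₁ + G (σ, i) (τ, j) := by
        rw [star_add, star_mul', hG.apply, hG.apply, Complex.star_def, Complex.conj_ofReal]
    _ = G (σ, j) (τ, j) * z₁ + G (σ, j) (τ, i) := by rw [hswap]
    _ = (G * Md m d z₁) (σ, j) (τ, j) := (mul_Md_apply_of_eq_succ z₁ G hij _ _).symm

theorem mulVec_eta {n : Type*} (B : Matrix n (Fin d × Fin m) ℂ) (c : Fin d → ℂ) {j : Fin m}
    (hj : (j : ℕ) + 1 = m) :
    B *ᵥ eta m d c = B.submatrix id (·, j) *ᵥ c := by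
  have eq_last_iff (k : Fin m) : (k : ℕ) + 1 = m ↔ k = j := by
    rw [Fin.ext_iff]
    omega
  ext p
  simp [Matrix.mulVec, dotProduct, eta, eq_last_iff, Fintype.sum_prod_type]

theorem conjTranspose_sub_self_mulVec_eta_apply_eq_zero
    {B : Matrix (Fin d × Fin m) (Fin d × Fin m) ℂ} {j : Fin m} (hj : (j : ℕ) + 1 = m)
    (hB : (B.submatrix (·, j) (·, j)).IsHermitian) (c : Fin d → ℂ) (σ : Fin d) :
    ((Bᴴ - B) *ᵥ eta m d c) (σ, j) = 0 := by
  have block_eq_zero : (Bᴴ - B).submatrix (·, j) (·, j) = (0 : Matrix (Fin d) (Fin d) ℂ) := by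
    rw [Matrix.submatrix_sub, Pi.sub_apply, Pi.sub_apply, ← Matrix.conjTranspose_submatrix, hB.eq,
      sub_self]
  calc ((Bᴴ - B) *ᵥ eta m d c) (σ, j)
      = ((Bᴴ - B).submatrix (·, j) (·, j) *ᵥ c) σ := by rw [mulVec_eta _ c hj]; rfl
    _ = 0 := by rw [block_eq_zero, Matrix.zero_mulVec, Pi.zero_apply]

/-- If `G` is an invertible Hermitian `md × md` matrix satisfying (A2), then for every
`c ∈ ℂ^d` the vector `x = (G⁻¹·(G·M_d)^* − M_d)·η(c)` satisfies `(G·x)_{(σ,m)} = 0`. -/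
theorem defect_vector_in_orthogonal_complement (m d : ℕ) (hm : 2 ≤ m) (hd : 1 ≤ d) (z₁ : ℝ)
    (G : Matrix (Fin d × Fin m) (Fin d × Fin m) ℂ) (hG : G.IsHermitian)
    (hGinv : IsUnit G.det) (hA2 : A2 m d hm G) (c : Fin d → ℂ) (σ : Fin d) :
    G.mulVec ((G⁻¹ * (G * Md m d z₁)ᴴ - Md m d z₁).mulVec (eta m d c))
        (σ, ⟨m - 1, by omega⟩) = 0 := by
  have corner_isHermitian := isHermitian_submatrix_mul_Md z₁ hG
    (i := ⟨m - 2, by omega⟩) (j := ⟨m - 1, by omega⟩) (by simp only; omega) hA2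
  rw [Matrix.mulVec_mulVec, Matrix.mul_sub, Matrix.mul_nonsing_inv_cancel_left G _ hGinv]
  exact conjTranspose_sub_self_mulVec_eta_apply_eq_zero (by simp only; omega)
    corner_isHermitian c σ
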